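/- Let a, b, b', c, c' be complex numbers with c, c' not nonpositive integers, and let x, y be real numbers with |x| + |y| < 1 such that |x/(x−1)| + |y/(1−x)| < 1. Then F₂(a; b, b'; c, c'; x, y) = (1−x)^{−a} · F₂(a; c−b, b'; c, c'; x/(x−1), y/(1−x)). -/

import Mathlib

noncomputable def poch (a : ℂ) (n : ℕ) : ℂ := ∏ i ∈ Finset.range n, (a + i)

/-- Appell series F₂(a;b,b';c,c';x,y). -/
noncomputable def appellF2 (a b b' c c' x y : ℂ) : ℂ :=
  ∑' p : ℕ × ℕ, poch a (p.1 + p.2) * poch b p.1 * poch b' p.2 /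
    (p.1.factorial * p.2.factorial * poch c p.1 * poch c' p.2) * x ^ p.1 * y ^ p.2

/-!
Summing the double series first over the powers of `x` gives
`F₂(a;b,b';c,c';x,y) = ∑ₙ (a)ₙ (b')ₙ / (n! (c')ₙ) yⁿ ₂F₁(a+n,b;c;x)`,
so the transformation is Pfaff's `₂F₁(a,b;c;x) = (1-x)^(-a) ₂F₁(a,c-b;c;x/(x-1))` applied to each
term.

Pfaff's formula itself comes from the Appell series `F₂(a;1,c-b;1,c;x,-x)`: for `‖x‖ < 1/2` its
expansion above is the right-hand side, since `₂F₁(s,1;1;x) = (1-x)^(-s)`, and its sum along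
antidiagonals is the left-hand side by Chu-Vandermonde. The identity theorem extends this to
`‖x‖ < 1`, `re x < 1/2`, the latter being equivalent to `‖x/(x-1)‖ < 1`.
-/

open Finset Filter Topology

section Pochhammer

theorem poch_eq_eval_ascPochhammer (a : ℂ) (n : ℕ) :
    poch a n = (ascPochhammer ℂ n).eval a := by
  induction n with
  | zero => simp [poch]
  | succ n ih =>
    rw [ascPochhammer_succ_eval, ← ih]
    exact prod_range_succ _ n

theorem poch_add (a : ℂ) (m n : ℕ) : poch a (m + n) = poch a m * poch (a + m) n := by
  simp only [poch, prod_range_add, Nat.cast_add, add_assoc]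

theorem poch_one (n : ℕ) : poch 1 n = n.factorial := by
  rw [poch_eq_eval_ascPochhammer, ascPochhammer_eval_one]

theorem poch_ne_zero {c : ℂ} (hc : ∀ n : ℕ, c ≠ -(n : ℂ)) (n : ℕ) : poch c n ≠ 0 :=
  prod_ne_zero_iff.mpr fun i _ h => hc i (eq_neg_of_add_eq_zero_left h)

theorem one_ne_neg_natCast (n : ℕ) : (1 : ℂ) ≠ -(n : ℂ) := by
  rw [Ne, eq_neg_iff_add_eq_zero, add_comm]
  exact n.cast_add_one_ne_zero

theorem smeval_ascPochhammer_eq_poch (a : ℂ) (n : ℕ) :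
    (ascPochhammer ℕ n).smeval a = poch a n := by
  rw [Polynomial.ascPochhammer_smeval_eq_eval, poch_eq_eval_ascPochhammer]

theorem smeval_descPochhammer_eq_poch (a : ℂ) (n : ℕ) :
    (descPochhammer ℤ n).smeval a = poch (a - n + 1) n := by
  rw [Polynomial.descPochhammer_smeval_eq_ascPochhammer, smeval_ascPochhammer_eq_poch]

theorem smeval_descPochhammer_neg (a : ℂ) (n : ℕ) :
    (descPochhammer ℤ n).smeval (-a) = (-1) ^ n * poch a n := by
  have h := Polynomial.ascPochhammer_smeval_neg_eq_descPochhammer (-a) n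
  rw [neg_neg, smeval_ascPochhammer_eq_poch] at h
  simp [h, Units.smul_def, ← mul_assoc, ← mul_pow]

-- Chu-Vandermonde `₂F₁(-N,d;c;1) = (c-d)_N / (c)_N`, multiplied by `(c)_N`.
theorem sum_antidiagonal_choose_mul_poch_mul_poch (c d : ℂ) (N : ℕ) :
    ∑ ij ∈ antidiagonal N,
      (N.choose ij.1 : ℂ) * (poch (c + ij.2) ij.1 * ((-1) ^ ij.2 * poch d ij.2)) =
        poch (c - d) N := by
  have h := Ring.descPochhammer_smeval_add N (Commute.all (c + N - 1) (-d))
  rw [smeval_descPochhammer_eq_poch, show c + N - 1 + -d - N + 1 = c - d by ring] at h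
  rw [h]
  refine sum_congr rfl fun ij hij => ?_
  rw [smeval_descPochhammer_neg, smeval_descPochhammer_eq_poch, ← mem_antidiagonal.mp hij]
  congr 3
  push_cast
  ring

end Pochhammer

section Gauss

theorem one_le_radius_ordinaryHypergeometricSeries {𝕂 : Type*} (𝔸 : Type*) [RCLike 𝕂]
    [NormedDivisionRing 𝔸] [NormedAlgebra 𝕂 𝔸] (a b c : 𝕂) :
    1 ≤ (ordinaryHypergeometricSeries 𝔸 a b c).radius := by
  by_cases habc : ∀ k : ℕ, ↑k ≠ -a ∧ ↑k ≠ -b ∧ ↑k ≠ -c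
  · exact (ordinaryHypergeometricSeries_radius_eq_one 𝔸 a b c habc).ge
  · obtain ⟨k, hk⟩ : ∃ k : ℕ, a = -k ∨ b = -k ∨ c = -k := by grind
    rcases hk with rfl | rfl | rfl
    · simp [ordinaryHypergeometric_radius_top_of_neg_nat₁]
    · simp [ordinaryHypergeometric_radius_top_of_neg_nat₂]
    · simp [ordinaryHypergeometric_radius_top_of_neg_nat₃]

theorem hasFPowerSeriesOnBall_ordinaryHypergeometric (a b c : ℂ) :
    HasFPowerSeriesOnBall (₂F₁ a b c : ℂ → ℂ) (ordinaryHypergeometricSeries ℂ a b c) 0 1 :=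
  have hr := one_le_radius_ordinaryHypergeometricSeries ℂ a b c
  (FormalMultilinearSeries.hasFPowerSeriesOnBall _ (one_pos.trans_le hr)).mono one_pos hr

theorem analyticAt_ordinaryHypergeometric (a b c : ℂ) {x : ℂ} (hx : ‖x‖ < 1) :
    AnalyticAt ℂ (₂F₁ a b c) x :=
  (hasFPowerSeriesOnBall_ordinaryHypergeometric a b c).analyticAt_of_mem
    (by simpa [← ofReal_norm] using hx)

theorem hasSum_ordinaryHypergeometric (a b c : ℂ) {x : ℂ} (hx : ‖x‖ < 1) :
    HasSum (fun n : ℕ => poch a n * poch b n / (n.factorial * poch c n) * x ^ n)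
      (₂F₁ a b c x) := by
  have h := (hasFPowerSeriesOnBall_ordinaryHypergeometric a b c).hasSum (y := x)
    (by simpa [← ofReal_norm] using hx)
  rw [ordinaryHypergeometricSeries_apply_eq', zero_add] at h
  convert! h using 2 with n
  rw [poch_eq_eval_ascPochhammer, poch_eq_eval_ascPochhammer, poch_eq_eval_ascPochhammer,
    smul_eq_mul]
  field

theorem ordinaryHypergeometric_eq_one_sub_cpow (a : ℂ) {b : ℂ} (hb : ∀ n : ℕ, b ≠ -(n : ℂ))
    {x : ℂ} (hx : ‖x‖ < 1) : ₂F₁ a b b x = (1 - x) ^ (-a) := by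
  have hb' (k : ℕ) : (k : ℂ) ≠ -b := fun h => hb k (by rw [h, neg_neg])
  have h := Complex.one_add_cpow_hasFPowerSeriesOnBall_zero (a := -a) |>.hasSum (y := -x)
    (by simpa [← ofReal_norm] using hx)
  rw [binomialSeries_eq_ordinaryHypergeometricSeries hb', neg_neg, zero_add,
    ← sub_eq_add_neg] at h
  rw [← h.tsum_eq]
  refine tsum_congr fun n => ?_
  simp only [FormalMultilinearSeries.compContinuousLinearMap_apply, Function.comp_def, neg_apply,
    ContinuousLinearMap.id_apply, neg_neg]

theorem exists_norm_poch_le (u : ℂ) {v : ℂ} (hv : ∀ n : ℕ, v ≠ -(n : ℂ)) {r : ℝ} (hr : 1 < r) :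
    ∃ C : ℝ, 0 ≤ C ∧ ∀ n : ℕ, ‖poch u n‖ ≤ C * r ^ n * ‖poch v n‖ := by
  have hr0 : 0 < r := one_pos.trans hr
  have hr_inv : ‖((r⁻¹ : ℝ) : ℂ)‖ < 1 := by
    rw [Complex.norm_real, norm_inv, Real.norm_of_nonneg hr0.le]
    exact inv_lt_one_of_one_lt₀ hr
  -- The terms of `₂F₁(u,1;v;1/r)` are `(u)ₙ / (v)ₙ r⁻ⁿ` and tend to `0`.
  obtain ⟨C, hC⟩ :=
    (hasSum_ordinaryHypergeometric u 1 v hr_inv).summable.tendsto_atTop_zero.norm.bddAbove_range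
  have hbound (n : ℕ) := hC (Set.mem_range_self n)
  refine ⟨C, (norm_nonneg _).trans (hbound 0), fun n => ?_⟩
  have hfact : (n.factorial : ℂ) ≠ 0 := Nat.cast_ne_zero.mpr n.factorial_ne_zero
  have hpos : 0 < ‖poch v n‖ := norm_pos_iff.mpr (poch_ne_zero hv n)
  have h := hbound n
  rw [poch_one, mul_comm (poch u n), mul_div_mul_left _ _ hfact, norm_mul, norm_div, norm_pow,
    Complex.norm_real, norm_inv, Real.norm_of_nonneg hr0.le, inv_pow, ← div_eq_mul_inv, div_div,
    div_le_iff₀ (by positivity)] at h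
  linarith

end Gauss

section Appell

/-- The general term of the double series `appellF2`, named so that its summability and its partial
sums along rows and diagonals can be stated. -/
noncomputable def appellF2Term (a b b' c c' x y : ℂ) (p : ℕ × ℕ) : ℂ :=
  poch a (p.1 + p.2) * poch b p.1 * poch b' p.2 /
    (p.1.factorial * p.2.factorial * poch c p.1 * poch c' p.2) * x ^ p.1 * y ^ p.2

theorem summable_choose_mul_pow_mul_pow {X Y : ℝ} (hX : 0 ≤ X) (hY : 0 ≤ Y) (h : X + Y < 1) :
    Summable (fun p : ℕ × ℕ => ((p.1 + p.2).choose p.1 : ℝ) * (X ^ p.1 * Y ^ p.2)) := by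
  rw [← HasAntidiagonal.sigmaAntidiagonalEquivProd.summable_iff,
    summable_sigma_of_nonneg fun q => by simp only [Function.comp]; positivity]
  refine ⟨fun N => Summable.of_finite, ?_⟩
  refine (summable_geometric_of_lt_one (by positivity) h).congr fun N => ?_
  rw [tsum_fintype, (Commute.all X Y).add_pow', ← sum_coe_sort]
  refine sum_congr rfl fun ij _ => ?_
  simp only [Function.comp, HasAntidiagonal.sigmaAntidiagonalEquivProd_apply, nsmul_eq_mul,
    mem_antidiagonal.mp ij.2]

theorem exists_one_lt_sq_mul_lt_one {s : ℝ} (hs : s < 1) : ∃ r : ℝ, 1 < r ∧ r ^ 2 * s < 1 := by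
  have hlim : Tendsto (fun r : ℝ => r ^ 2 * s) (𝓝[>] 1) (𝓝 s) :=
    tendsto_nhdsWithin_of_tendsto_nhds <|
      Continuous.tendsto' (by fun_prop) _ _ (by rw [one_pow, one_mul])
  exact (eventually_mem_nhdsWithin.and (hlim.eventually_lt_const hs)).exists

variable {c c' : ℂ}

theorem summable_appellF2Term (a b b' : ℂ) (hc : ∀ n : ℕ, c ≠ -(n : ℂ))
    (hc' : ∀ n : ℕ, c' ≠ -(n : ℂ)) {x y : ℂ} (hxy : ‖x‖ + ‖y‖ < 1) :
    Summable (appellF2Term a b b' c c' x y) := by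
  obtain ⟨r, hr, hrs⟩ := exists_one_lt_sq_mul_lt_one hxy
  have : 0 < r := one_pos.trans hr
  obtain ⟨A, hA, ha⟩ := exists_norm_poch_le a one_ne_neg_natCast hr
  obtain ⟨B, hB, hb⟩ := exists_norm_poch_le b hc hr
  obtain ⟨B', -, hb'⟩ := exists_norm_poch_le b' hc' hr
  simp only [poch_one, Complex.norm_natCast] at ha
  have hmajorant := (summable_choose_mul_pow_mul_pow (X := r ^ 2 * ‖x‖) (Y := r ^ 2 * ‖y‖)
    (by positivity) (by positivity) (by rwa [← mul_add])).mul_left (A * B * B')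
  refine Summable.of_norm_bounded hmajorant fun ⟨m, n⟩ => ?_
  have hpos : 0 < ‖poch c m‖ := norm_pos_iff.mpr (poch_ne_zero hc m)
  have hpos' : 0 < ‖poch c' n‖ := norm_pos_iff.mpr (poch_ne_zero hc' n)
  simp only [appellF2Term, norm_mul, norm_div, norm_pow, Complex.norm_natCast]
  calc ‖poch a (m + n)‖ * ‖poch b m‖ * ‖poch b' n‖ /
        (m.factorial * n.factorial * ‖poch c m‖ * ‖poch c' n‖) * ‖x‖ ^ m * ‖y‖ ^ n
      ≤ (A * r ^ (m + n) * (m + n).factorial) * (B * r ^ m * ‖poch c m‖) *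
          (B' * r ^ n * ‖poch c' n‖) /
        (m.factorial * n.factorial * ‖poch c m‖ * ‖poch c' n‖) * ‖x‖ ^ m * ‖y‖ ^ n := by
        gcongr
        exacts [ha _, hb _, hb' _]
    _ = A * B * B' * ((m + n).choose m * ((r ^ 2 * ‖x‖) ^ m * (r ^ 2 * ‖y‖) ^ n)) := by
        rw [Nat.cast_add_choose]
        field

theorem hasSum_appellF2 (a b b' : ℂ) (hc : ∀ n : ℕ, c ≠ -(n : ℂ))
    (hc' : ∀ n : ℕ, c' ≠ -(n : ℂ)) {x y : ℂ} (hxy : ‖x‖ + ‖y‖ < 1) :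
    HasSum (appellF2Term a b b' c c' x y) (appellF2 a b b' c c' x y) :=
  (summable_appellF2Term a b b' hc hc' hxy).hasSum

theorem hasSum_appellF2_ordinaryHypergeometric (a b b' : ℂ) (hc : ∀ n : ℕ, c ≠ -(n : ℂ))
    (hc' : ∀ n : ℕ, c' ≠ -(n : ℂ)) {x y : ℂ} (hxy : ‖x‖ + ‖y‖ < 1) :
    HasSum (fun n : ℕ =>
        poch a n * poch b' n / (n.factorial * poch c' n) * y ^ n * ₂F₁ (a + n) b c x)
      (appellF2 a b b' c c' x y) := by
  have hx : ‖x‖ < 1 := by linarith [norm_nonneg y]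
  refine ((Equiv.prodComm ℕ ℕ).hasSum_iff.mpr
    (hasSum_appellF2 a b b' hc hc' hxy)).prod_fiberwise fun n => ?_
  convert! (hasSum_ordinaryHypergeometric (a + n) b c hx).mul_left
    (poch a n * poch b' n / (n.factorial * poch c' n) * y ^ n) using 2 with m
  simp only [Function.comp, Equiv.prodComm_apply, Prod.swap_prod_mk, appellF2Term]
  rw [add_comm m n, poch_add]
  ring

theorem sum_antidiagonal_appellF2Term (a d : ℂ) (hc : ∀ n : ℕ, c ≠ -(n : ℂ)) (x : ℂ) (N : ℕ) :
    ∑ ij ∈ antidiagonal N, appellF2Term a 1 d 1 c x (-x) ij =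
      poch a N * poch (c - d) N / (N.factorial * poch c N) * x ^ N := by
  rw [← sum_antidiagonal_choose_mul_poch_mul_poch, mul_sum, sum_div, sum_mul]
  refine sum_congr rfl fun ⟨i, j⟩ hij => ?_
  obtain rfl : i + j = N := mem_antidiagonal.mp hij
  have hi := poch_ne_zero one_ne_neg_natCast i
  have hj := poch_ne_zero hc j
  have hshift : poch (c + j) i ≠ 0 := by
    refine right_ne_zero_of_mul (a := poch c j) ?_
    rw [← poch_add]
    exact poch_ne_zero hc _
  simp only [appellF2Term]
  rw [Nat.cast_add_choose, add_comm i j, poch_add c, neg_pow x]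
  field [Nat.factorial_ne_zero]

theorem appellF2_eq_ordinaryHypergeometric (a d : ℂ) (hc : ∀ n : ℕ, c ≠ -(n : ℂ)) {x : ℂ}
    (hx : ‖x‖ < 1 / 2) : appellF2 a 1 d 1 c x (-x) = ₂F₁ a (c - d) c x := by
  have hF2 := hasSum_appellF2 a 1 d one_ne_neg_natCast hc (x := x) (y := -x)
    (by rw [norm_neg]; linarith)
  refine HasSum.unique ?_ (hasSum_ordinaryHypergeometric a (c - d) c (by linarith))
  refine (HasAntidiagonal.sigmaAntidiagonalEquivProd.hasSum_iff.mpr hF2).sigma fun N => ?_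
  rw [← sum_antidiagonal_appellF2Term a d hc x N]
  exact (antidiagonal N).hasSum _

end Appell

section Pfaff

variable {c : ℂ}

theorem ne_one_of_norm_lt_one {E : Type*} [SeminormedRing E] [NormOneClass E] {x : E}
    (hx : ‖x‖ < 1) : x ≠ 1 := by
  rintro rfl
  exact hx.ne norm_one

theorem norm_div_sub_one_lt_one_iff {x : ℂ} (hx : x ≠ 1) : ‖x / (x - 1)‖ < 1 ↔ x.re < 1 / 2 := by
  rw [norm_div, div_lt_one (norm_pos_iff.mpr (sub_ne_zero.mpr hx)),
    ← sq_lt_sq₀ (norm_nonneg _) (norm_nonneg _), Complex.sq_norm, Complex.sq_norm,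
    Complex.normSq_apply, Complex.normSq_apply]
  simp only [Complex.sub_re, Complex.sub_im, Complex.one_re, Complex.one_im]
  constructor <;> intro h <;> linarith

theorem one_sub_cpow_neg_add_natCast {x : ℂ} (hx : x ≠ 1) (a : ℂ) (n : ℕ) :
    (1 - x) ^ (-(a + n)) = (1 - x) ^ (-a) / (1 - x) ^ n := by
  rw [neg_add, ← sub_eq_add_neg, Complex.cpow_sub _ _ (sub_ne_zero.mpr hx.symm),
    Complex.cpow_natCast]

theorem ordinaryHypergeometric_pfaff_of_norm_lt_half (a b : ℂ) (hc : ∀ n : ℕ, c ≠ -(n : ℂ))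
    {x : ℂ} (hx : ‖x‖ < 1 / 2) :
    ₂F₁ a b c x = (1 - x) ^ (-a) * ₂F₁ a (c - b) c (x / (x - 1)) := by
  have hx1 : x ≠ 1 := ne_one_of_norm_lt_one (by linarith)
  have hpfaff : ‖x / (x - 1)‖ < 1 :=
    (norm_div_sub_one_lt_one_iff hx1).mpr ((Complex.re_le_norm x).trans_lt hx)
  have hdiag := appellF2_eq_ordinaryHypergeometric a (c - b) hc hx
  rw [sub_sub_cancel] at hdiag
  rw [← hdiag]
  refine (hasSum_appellF2_ordinaryHypergeometric a 1 (c - b) one_ne_neg_natCast hc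
    (by rw [norm_neg]; linarith)).unique ?_
  convert! (hasSum_ordinaryHypergeometric a (c - b) c hpfaff).mul_left ((1 - x) ^ (-a)) using 2
    with n
  rw [ordinaryHypergeometric_eq_one_sub_cpow _ one_ne_neg_natCast (by linarith),
    one_sub_cpow_neg_add_natCast hx1, ← neg_sub 1 x, div_neg, ← neg_div, div_pow]
  ring

theorem ordinaryHypergeometric_pfaff (a b : ℂ) (hc : ∀ n : ℕ, c ≠ -(n : ℂ)) {x : ℂ}
    (hx : ‖x‖ < 1) (hx' : ‖x / (x - 1)‖ < 1) :
    ₂F₁ a b c x = (1 - x) ^ (-a) * ₂F₁ a (c - b) c (x / (x - 1)) := by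
  let U : Set ℂ := Metric.ball 0 1 ∩ {z | z.re < 1 / 2}
  have hU : IsPreconnected U :=
    ((convex_ball 0 1).inter (convex_halfSpace_re_lt _)).isPreconnected
  have hleft : AnalyticOnNhd ℂ (₂F₁ a b c) U := fun z hz =>
    analyticAt_ordinaryHypergeometric a b c (mem_ball_zero_iff.mp hz.1)
  have hright : AnalyticOnNhd ℂ
      (fun z => (1 - z) ^ (-a) * ₂F₁ a (c - b) c (z / (z - 1))) U := fun z hz => by
    have hz1 : ‖z‖ < 1 := mem_ball_zero_iff.mp hz.1
    have hne : z ≠ 1 := ne_one_of_norm_lt_one hz1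
    have hslit : 1 - z ∈ Complex.slitPlane :=
      sub_eq_add_neg 1 z ▸ Complex.mem_slitPlane_of_norm_lt_one (by rwa [norm_neg])
    have hmoebius : AnalyticAt ℂ (fun z : ℂ => z / (z - 1)) z :=
      analyticAt_id.div (analyticAt_id.sub analyticAt_const) (sub_ne_zero.mpr hne)
    exact ((analyticAt_const.sub analyticAt_id).cpow analyticAt_const hslit).mul
      ((analyticAt_ordinaryHypergeometric a (c - b) c
        ((norm_div_sub_one_lt_one_iff hne).mpr hz.2)).fun_comp
          (f := fun z : ℂ => z / (z - 1)) hmoebius)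
  have hlocal : ₂F₁ a b c =ᶠ[𝓝 0] fun z : ℂ =>
      (1 - z) ^ (-a) * ₂F₁ a (c - b) c (z / (z - 1)) := by
    filter_upwards [Metric.ball_mem_nhds (0 : ℂ) one_half_pos] with z hz
    exact ordinaryHypergeometric_pfaff_of_norm_lt_half a b hc (mem_ball_zero_iff.mp hz)
  exact hleft.eqOn_of_preconnected_of_eventuallyEq hright hU (by simp [U]) hlocal
    ⟨mem_ball_zero_iff.mpr hx, (norm_div_sub_one_lt_one_iff (ne_one_of_norm_lt_one hx)).mp hx'⟩

end Pfaff

theorem appellF2_transformation_general (a b b' c c' x y : ℂ)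
    (hc : ∀ n : ℕ, c ≠ -(n : ℂ)) (hc' : ∀ n : ℕ, c' ≠ -(n : ℂ))
    (hxy : ‖x‖ + ‖y‖ < 1) (hxy' : ‖x / (x - 1)‖ + ‖y / (1 - x)‖ < 1) :
    appellF2 a b b' c c' x y =
      (1 - x) ^ (-a) * appellF2 a (c - b) b' c c' (x / (x - 1)) (y / (1 - x)) := by
  have hx : ‖x‖ < 1 := by linarith [norm_nonneg y]
  have hx' : ‖x / (x - 1)‖ < 1 := by linarith [norm_nonneg (y / (1 - x))]
  have hx1 : x ≠ 1 := ne_one_of_norm_lt_one hx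
  refine (hasSum_appellF2_ordinaryHypergeometric a b b' hc hc' hxy).unique ?_
  convert! (hasSum_appellF2_ordinaryHypergeometric a (c - b) b' hc hc' hxy').mul_left
    ((1 - x) ^ (-a)) using 2 with n
  rw [ordinaryHypergeometric_pfaff (a + n) b hc hx hx', one_sub_cpow_neg_add_natCast hx1, div_pow]
  ring

theorem appellF2_transformation (a b b' c c' : ℂ) (x y : ℝ)
    (hc : ∀ n : ℕ, c ≠ -(n : ℂ)) (hc' : ∀ n : ℕ, c' ≠ -(n : ℂ))
    (hxy : |x| + |y| < 1)
    (hxy' : |x / (x - 1)| + |y / (1 - x)| < 1) :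
    appellF2 a b b' c c' x y =
      ((1 : ℂ) - x) ^ (-a) *
        appellF2 a (c - b) b' c c' ((x : ℂ) / (x - 1)) ((y : ℂ) / (1 - x)) :=
  appellF2_transformation_general a b b' c c' x y hc hc' (by simpa using hxy)
    (by exact_mod_cast hxy')
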